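/- Let a < b be reals and let F and G be Borel probability measures on [a,b]. Define AP_{2,[a,b]} as the set of twice continuously differentiable functions u : [a,b] → ℝ with u'(x) ≥ 0 and u''(x) ≤ 0 for all x, and u'(x) + u''(x)·(b−x) ≤ 0 for all x ∈ (a,b). Suppose that ∫ u dF ≥ ∫ u dG for every function u of the form u = v + w with v ∈ AP_{2,[a,b]} and w ∈ I_{2,[a,b]}. Then F ⪰_{2,[a,b]-S} G. -/

import Mathlib

open MeasureTheory Set

noncomputable section

/-- A nonnegative function `v` on `[a,b]` is `α`-convex if `x ↦ (v x)^(1/α)` is convex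
on `[a,b]`. -/
def AlphaConvexOn (α a b : ℝ) (v : ℝ → ℝ) : Prop :=
  (∀ x ∈ Icc a b, 0 ≤ v x) ∧ ConvexOn ℝ (Icc a b) (fun x => v x ^ (1 / α))

/-- `u ∈ I_{α,[a,b]}`: `u` is bounded and measurable on `[a,b]`, weakly increasing on
`[a,b]`, and `x ↦ u b - u x` is `α`-convex on `[a,b]`. -/
def MemI (α a b : ℝ) (u : ℝ → ℝ) : Prop :=
  (∃ M, ∀ x ∈ Icc a b, |u x| ≤ M) ∧
  Measurable u ∧
  MonotoneOn u (Icc a b) ∧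
  AlphaConvexOn α a b (fun x => u b - u x)

/-- `F ⪰_{α,[a,b]-I} G`: the `α,[a,b]`-concave stochastic order. -/
def ConcaveOrder (α a b : ℝ) (F G : Measure ℝ) : Prop :=
  ∀ u : ℝ → ℝ, MemI α a b u → ∫ x, u x ∂G ≤ ∫ x, u x ∂F

/-- `F ⪰_{n,[a,b]-S} G`: the `n,[a,b]`-sufficient stochastic order. -/
def SuffOrder (n : ℕ) (a b : ℝ) (F G : Measure ℝ) : Prop :=
  ∀ c : Fin n → ℝ, (∀ i, c i ∈ Icc a b) →
    ∫ x, ∏ i, max (c i - x) 0 ∂F ≤ ∫ x, ∏ i, max (c i - x) 0 ∂G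

/-- The cumulative distribution function of a Borel measure on `ℝ`. -/
def cdfR (μ : Measure ℝ) (x : ℝ) : ℝ := (μ (Iic x)).toReal

/-- The set `AP_{2,[a,b]}`: twice continuously differentiable functions with `u' ≥ 0`,
`u'' ≤ 0` on `[a,b]`, and `u' + u''·(b−x) ≤ 0` on `(a,b)`. -/
def MemAP (a b : ℝ) (u : ℝ → ℝ) : Prop :=
  ∃ u' u'' : ℝ → ℝ,
    (∀ x ∈ Icc a b, HasDerivWithinAt u (u' x) (Icc a b) x) ∧
    (∀ x ∈ Icc a b, HasDerivWithinAt u' (u'' x) (Icc a b) x) ∧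
    ContinuousOn u'' (Icc a b) ∧
    (∀ x ∈ Icc a b, 0 ≤ u' x) ∧
    (∀ x ∈ Icc a b, u'' x ≤ 0) ∧
    (∀ x ∈ Ioo a b, u' x + u'' x * (b - x) ≤ 0)

/-!
Write `s₊ = max s 0`. If `f` and `g` are twice continuously differentiable, decreasing and convex
on `[a,b]` and vanish at `b`, then `-(f g)` belongs to `AP_{2,[a,b]}`: the inequality
`f' g + f g' + (f'' g + 2 f' g' + f g'') (b - x) ≥ 0` comes from evaluating the tangents of `f` and
`g` at `b`. Smoothing `s₊` from below by convex functions makes `(c₁ - x)₊ (c₂ - x)₊` a limit of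
such products, and the inequality between the integrals passes to it by dominated convergence.
-/

open Filter Topology

lemma tangent_le_of_convexOn {S : Set ℝ} {f : ℝ → ℝ} {x y : ℝ} (hf : ConvexOn ℝ S f)
    (hx : x ∈ S) (hy : y ∈ S) (hfx : DifferentiableWithinAt ℝ f S x) :
    f x + derivWithin f S x * (y - x) ≤ f y := by
  rcases lt_trichotomy x y with hxy | rfl | hyx
  · have hslope := hf.derivWithin_le_slope hx hy hxy hfx
    rw [slope_def_field, le_div_iff₀ (sub_pos.2 hxy)] at hslope
    linarith
  · simp
  · have hslope := hf.slope_le_derivWithin hy hx hyx hfx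
    rw [slope_def_field, div_le_iff₀ (sub_pos.2 hyx)] at hslope
    linarith

/-- The twice continuously differentiable counterpart on `[a,b]` of a shortfall function
`x ↦ max (c - x) 0`, `c ≤ b`: weakly decreasing, convex, and zero at `b`. -/
structure IsSmoothShortfall (a b : ℝ) (f : ℝ → ℝ) : Prop where
  contDiffOn : ContDiffOn ℝ 2 f (Icc a b)
  antitoneOn : AntitoneOn f (Icc a b)
  convexOn : ConvexOn ℝ (Icc a b) f
  right_eq_zero : f b = 0

namespace IsSmoothShortfall

variable {a b : ℝ} {f g : ℝ → ℝ} {x : ℝ}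

lemma nonneg (hf : IsSmoothShortfall a b f) (hx : x ∈ Icc a b) : 0 ≤ f x :=
  hf.right_eq_zero ▸ hf.antitoneOn hx (right_mem_Icc.2 (hx.1.trans hx.2)) hx.2

lemma differentiableOn (hf : IsSmoothShortfall a b f) : DifferentiableOn ℝ f (Icc a b) :=
  hf.contDiffOn.differentiableOn two_ne_zero

lemma contDiffOn_derivWithin (hab : a < b) (hf : IsSmoothShortfall a b f) :
    ContDiffOn ℝ 1 (derivWithin f (Icc a b)) (Icc a b) :=
  hf.contDiffOn.derivWithin (uniqueDiffOn_Icc hab) (by norm_num)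

lemma derivWithin_nonpos (hf : IsSmoothShortfall a b f) : derivWithin f (Icc a b) x ≤ 0 :=
  hf.antitoneOn.derivWithin_nonpos

lemma derivWithin_derivWithin_nonneg (hf : IsSmoothShortfall a b f) :
    0 ≤ derivWithin (derivWithin f (Icc a b)) (Icc a b) x :=
  (hf.convexOn.monotoneOn_derivWithin hf.differentiableOn).derivWithin_nonneg

lemma add_derivWithin_mul_sub_nonpos (hf : IsSmoothShortfall a b f) (hx : x ∈ Icc a b) :
    f x + derivWithin f (Icc a b) x * (b - x) ≤ 0 :=
  hf.right_eq_zero ▸ tangent_le_of_convexOn hf.convexOn hx (right_mem_Icc.2 (hx.1.trans hx.2))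
    (hf.differentiableOn x hx)

lemma derivWithin_mul_derivWithin_nonneg (hf : IsSmoothShortfall a b f)
    (hg : IsSmoothShortfall a b g) :
    0 ≤ derivWithin f (Icc a b) x * derivWithin g (Icc a b) x :=
  mul_nonneg_of_nonpos_of_nonpos hf.derivWithin_nonpos hg.derivWithin_nonpos

lemma derivWithin_derivWithin_mul_nonneg (hf : IsSmoothShortfall a b f)
    (hg : IsSmoothShortfall a b g) (hx : x ∈ Icc a b) :
    0 ≤ derivWithin (derivWithin f (Icc a b)) (Icc a b) x * g x :=
  mul_nonneg hf.derivWithin_derivWithin_nonneg (hg.nonneg hx)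

lemma derivWithin_mul_add_mul_sub_nonneg (hf : IsSmoothShortfall a b f)
    (hg : IsSmoothShortfall a b g) (hx : x ∈ Icc a b) :
    let f' := derivWithin f (Icc a b); let f'' := derivWithin f' (Icc a b)
    let g' := derivWithin g (Icc a b); let g'' := derivWithin g' (Icc a b);
    0 ≤ (f' x * g x + f x * g' x) + (f'' x * g x + 2 * (f' x * g' x) + f x * g'' x) * (b - x) := by
  intro f' f'' g' g''
  have tangent_f : 0 ≤ g' x * (f x + f' x * (b - x)) :=
    mul_nonneg_of_nonpos_of_nonpos hg.derivWithin_nonpos (hf.add_derivWithin_mul_sub_nonpos hx)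
  have tangent_g : 0 ≤ f' x * (g x + g' x * (b - x)) :=
    mul_nonneg_of_nonpos_of_nonpos hf.derivWithin_nonpos (hg.add_derivWithin_mul_sub_nonpos hx)
  have second_f : 0 ≤ f'' x * g x * (b - x) :=
    mul_nonneg (hf.derivWithin_derivWithin_mul_nonneg hg hx) (sub_nonneg.2 hx.2)
  have second_g : 0 ≤ g'' x * f x * (b - x) :=
    mul_nonneg (hg.derivWithin_derivWithin_mul_nonneg hf hx) (sub_nonneg.2 hx.2)
  linarith

lemma memAP_neg_mul (hab : a < b) (hf : IsSmoothShortfall a b f) (hg : IsSmoothShortfall a b g) :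
    MemAP a b fun x => -(f x * g x) := by
  set f' := derivWithin f (Icc a b)
  set g' := derivWithin g (Icc a b)
  set f'' := derivWithin f' (Icc a b)
  set g'' := derivWithin g' (Icc a b)
  have hf' : ContDiffOn ℝ 1 f' (Icc a b) := hf.contDiffOn_derivWithin hab
  have hg' : ContDiffOn ℝ 1 g' (Icc a b) := hg.contDiffOn_derivWithin hab
  have df x hx := (hf.differentiableOn x hx).hasDerivWithinAt
  have dg x hx := (hg.differentiableOn x hx).hasDerivWithinAt
  have df' x hx := (hf'.differentiableOn one_ne_zero x hx).hasDerivWithinAt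
  have dg' x hx := (hg'.differentiableOn one_ne_zero x hx).hasDerivWithinAt
  refine ⟨fun x => -(f' x * g x + f x * g' x),
    fun x => -((f'' x * g x + f' x * g' x) + (f' x * g' x + f x * g'' x)),
    fun x hx => ((df x hx).mul (dg x hx)).neg,
    fun x hx => (((df' x hx).mul (dg x hx)).add ((df x hx).mul (dg' x hx))).neg, ?_,
    fun x hx => ?_, fun x hx => ?_, fun x hx => ?_⟩
  · have cf'' := hf'.continuousOn_derivWithin (uniqueDiffOn_Icc hab) le_rfl
    have cg'' := hg'.continuousOn_derivWithin (uniqueDiffOn_Icc hab) le_rfl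
    have cf'g' := hf'.continuousOn.mul hg'.continuousOn
    exact (((cf''.mul hg.contDiffOn.continuousOn).add cf'g').add
      (cf'g'.add (hf.contDiffOn.continuousOn.mul cg''))).neg
  · exact neg_nonneg.2 <| add_nonpos
      (mul_nonpos_of_nonpos_of_nonneg hf.derivWithin_nonpos (hg.nonneg hx))
      (mul_nonpos_of_nonneg_of_nonpos (hf.nonneg hx) hg.derivWithin_nonpos)
  · linarith [hf.derivWithin_mul_derivWithin_nonneg hg (x := x),
      hf.derivWithin_derivWithin_mul_nonneg hg hx, hg.derivWithin_derivWithin_mul_nonneg hf hx]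
  · linarith [hf.derivWithin_mul_add_mul_sub_nonneg hg (Ioo_subset_Icc_self hx)]

end IsSmoothShortfall

/-- A smooth convex approximation of the positive part `max s 0` from below: its derivative
increases smoothly from `0` at `s ≤ 0` to `1` at `s ≥ ε`. Only `ε > 0` is meaningful. -/
def smoothPosPart (ε s : ℝ) : ℝ := ∫ t in 0..s, Real.smoothTransition (t / ε)

section SmoothPosPart

variable {ε : ℝ}

lemma smoothPosPart_zero_right : smoothPosPart ε 0 = 0 := intervalIntegral.integral_same

lemma hasDerivAt_smoothPosPart (s : ℝ) :
    HasDerivAt (smoothPosPart ε) (Real.smoothTransition (s / ε)) s :=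
  ((Real.smoothTransition.continuous.comp (continuous_id.div_const ε)).integral_hasStrictDerivAt
    0 s).hasDerivAt

lemma differentiable_smoothPosPart : Differentiable ℝ (smoothPosPart ε) :=
  fun s => (hasDerivAt_smoothPosPart s).differentiableAt

lemma deriv_smoothPosPart :
    deriv (smoothPosPart ε) = fun s => Real.smoothTransition (s / ε) :=
  funext fun s => (hasDerivAt_smoothPosPart s).deriv

lemma contDiff_smoothPosPart {n : ℕ∞} : ContDiff ℝ n (smoothPosPart ε) := by
  refine ContDiff.of_le (n := (n : WithTop ℕ∞) + 1) ?_ le_self_add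
  refine contDiff_succ_iff_deriv.2 ⟨differentiable_smoothPosPart, by simp, ?_⟩
  rw [deriv_smoothPosPart]
  exact Real.smoothTransition.contDiff.comp (contDiff_id.div_const ε)

lemma monotone_smoothPosPart : Monotone (smoothPosPart ε) :=
  monotone_of_deriv_nonneg differentiable_smoothPosPart fun s => by
    rw [deriv_smoothPosPart]
    exact Real.smoothTransition.nonneg _

lemma convexOn_smoothPosPart (hε : 0 < ε) : ConvexOn ℝ univ (smoothPosPart ε) := by
  refine Monotone.convexOn_univ_of_deriv differentiable_smoothPosPart ?_
  rw [deriv_smoothPosPart]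
  exact fun s t hst => Real.smoothTransition.monotone (by gcongr)

lemma smoothPosPart_tangent_le (hε : 0 < ε) (s t : ℝ) :
    smoothPosPart ε s + Real.smoothTransition (s / ε) * (t - s) ≤ smoothPosPart ε t := by
  simpa only [derivWithin_univ, deriv_smoothPosPart] using
    tangent_le_of_convexOn (convexOn_smoothPosPart hε) (mem_univ s) (mem_univ t)
      (differentiable_smoothPosPart s).differentiableWithinAt

lemma smoothPosPart_nonneg (hε : 0 < ε) (s : ℝ) : 0 ≤ smoothPosPart ε s := by
  simpa [smoothPosPart_zero_right] using smoothPosPart_tangent_le hε 0 s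

lemma smoothPosPart_le_max (hε : 0 < ε) (s : ℝ) : smoothPosPart ε s ≤ max s 0 := by
  rcases le_total s 0 with hs | hs
  · exact le_max_of_le_right (smoothPosPart_zero_right (ε := ε) ▸ monotone_smoothPosPart hs)
  · have htangent := smoothPosPart_tangent_le hε s 0
    rw [smoothPosPart_zero_right] at htangent
    have hslope := mul_le_of_le_one_left hs (Real.smoothTransition.le_one (s / ε))
    exact le_max_of_le_left (by linarith)

lemma max_sub_le_smoothPosPart (hε : 0 < ε) (s : ℝ) : max s 0 - ε ≤ smoothPosPart ε s := by
  have hnonneg := smoothPosPart_nonneg hε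
  have htangent := smoothPosPart_tangent_le hε ε s
  rw [div_self hε.ne', Real.smoothTransition.one] at htangent
  rw [sub_le_iff_le_add]
  exact max_le (by linarith [hnonneg ε]) (by linarith [hnonneg s])

lemma tendsto_smoothPosPart (s : ℝ) :
    Tendsto (fun ε => smoothPosPart ε s) (𝓝[>] 0) (𝓝 (max s 0)) := by
  have hlower : Tendsto (fun ε => max s 0 - ε) (𝓝[>] 0) (𝓝 (max s 0)) := by
    simpa using ((tendsto_id (x := 𝓝 (0 : ℝ))).mono_left nhdsWithin_le_nhds).const_sub (max s 0)
  refine tendsto_of_tendsto_of_tendsto_of_le_of_le' hlower tendsto_const_nhds ?_ ?_ <;>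
    filter_upwards [self_mem_nhdsWithin] with ε hε
  · exact max_sub_le_smoothPosPart hε s
  · exact smoothPosPart_le_max hε s

lemma isSmoothShortfall_smoothPosPart_sub {a b c : ℝ} (hε : 0 < ε) (hcb : c ≤ b) :
    IsSmoothShortfall a b fun x => smoothPosPart ε (c - x) where
  contDiffOn := (contDiff_smoothPosPart.comp (contDiff_const.sub contDiff_id)).contDiffOn
  antitoneOn := fun _ _ _ _ hxy => monotone_smoothPosPart (sub_le_sub_left hxy c)
  convexOn := ((convexOn_smoothPosPart hε).comp_affineMap
    (AffineEquiv.constVSub ℝ c).toAffineMap).subset (subset_univ _) (convex_Icc a b)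
  right_eq_zero := ((smoothPosPart_le_max hε _).trans_eq
    (max_eq_right (sub_nonpos.2 hcb))).antisymm (smoothPosPart_nonneg hε _)

lemma tendsto_integral_prod_smoothPosPart {ι : Type*} [Fintype ι] {μ : Measure ℝ} {c : ι → ℝ}
    (hμ : Integrable (fun x => ∏ i, max (c i - x) 0) μ) :
    Tendsto (fun ε => ∫ x, ∏ i, smoothPosPart ε (c i - x) ∂μ) (𝓝[>] 0)
      (𝓝 (∫ x, ∏ i, max (c i - x) 0 ∂μ)) := by
  refine tendsto_integral_filter_of_dominated_convergence _ ?_ ?_ hμ ?_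
  · refine Eventually.of_forall fun ε => Continuous.aestronglyMeasurable ?_
    have := (differentiable_smoothPosPart (ε := ε)).continuous
    fun_prop
  · filter_upwards [self_mem_nhdsWithin] with ε hε
    refine Eventually.of_forall fun x => ?_
    rw [Real.norm_of_nonneg (Finset.prod_nonneg fun i _ => smoothPosPart_nonneg hε _)]
    exact Finset.prod_le_prod (fun i _ => smoothPosPart_nonneg hε _)
      fun i _ => smoothPosPart_le_max hε _
  · exact Eventually.of_forall fun x => tendsto_finsetProd _ fun i _ => tendsto_smoothPosPart _

end SmoothPosPart

lemma integrable_of_continuous_of_measure_compl_eq_zero {X E : Type*} [TopologicalSpace X]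
    [MeasurableSpace X] [OpensMeasurableSpace X] [T2Space X] [NormedAddCommGroup E]
    {μ : Measure X} [IsFiniteMeasureOnCompacts μ] {K : Set X} (hK : IsCompact K) (hμ : μ Kᶜ = 0)
    {f : X → E} (hf : Continuous f) : Integrable f μ := by
  rw [← Measure.restrict_eq_self_of_ae_mem (mem_ae_iff.2 hμ)]
  exact hf.continuousOn.integrableOn_compact hK

lemma memI_const (α a b k : ℝ) : MemI α a b fun _ => k := by
  refine ⟨⟨|k|, fun _ _ => le_rfl⟩, measurable_const, monotoneOn_const, ?_⟩
  simp only [AlphaConvexOn, sub_self]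
  exact ⟨fun _ _ => le_rfl, convexOn_const _ (convex_Icc a b)⟩

theorem stmt_18_general {a b : ℝ} (hab : a < b)
    {F G : Measure ℝ} [IsFiniteMeasure F] [IsFiniteMeasure G]
    (hF : F (Icc a b)ᶜ = 0) (hG : G (Icc a b)ᶜ = 0)
    (h : ∀ v : ℝ → ℝ, MemAP a b v → ∫ x, v x ∂G ≤ ∫ x, v x ∂F) :
    SuffOrder 2 a b F G := by
  intro c hc
  have hcont : Continuous fun x : ℝ => ∏ i, max (c i - x) 0 := by fun_prop
  have hlim {μ : Measure ℝ} [IsFiniteMeasure μ] (hμ : μ (Icc a b)ᶜ = 0) :=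
    tendsto_integral_prod_smoothPosPart
      (integrable_of_continuous_of_measure_compl_eq_zero isCompact_Icc hμ hcont)
  refine le_of_tendsto_of_tendsto (hlim hF) (hlim hG) ?_
  filter_upwards [self_mem_nhdsWithin] with ε hε
  have hshortfall i := isSmoothShortfall_smoothPosPart_sub (a := a) hε (hc i).2
  have hAP := h _ ((hshortfall 0).memAP_neg_mul hab (hshortfall 1))
  simpa only [integral_neg, neg_le_neg_iff, Fin.prod_univ_two] using hAP

theorem stmt_18 (a b : ℝ) (hab : a < b)
    (F G : Measure ℝ) [IsProbabilityMeasure F] [IsProbabilityMeasure G]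
    (hF : F (Icc a b)ᶜ = 0) (hG : G (Icc a b)ᶜ = 0)
    (h : ∀ v w : ℝ → ℝ, MemAP a b v → MemI 2 a b w →
      ∫ x, (v x + w x) ∂G ≤ ∫ x, (v x + w x) ∂F) :
    SuffOrder 2 a b F G :=
  stmt_18_general hab hF hG fun v hv => by simpa using h v _ hv (memI_const 2 a b 0)
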